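/- There exists a real number a ∈ (0, 1/7) such that the iterated function system 𝒮₁(a) = {x/7, x/7 + a, x/7 + 6/7} satisfies the weak separation property and the endpoint separation condition (there exists c > 0 such that for every k ≥ 0, all words σ, τ of length k and all z, w ∈ {0,1}, either S_σ(z) = S_τ(w) or |S_σ(z) − S_τ(w)| > c · 7^{−k}), yet 𝒮₁(a) does not satisfy the convex finite type condition; moreover its attractor K satisfies {0,1} ⊆ K ⊆ [0,1] and K ≠ [0,1]. -/

import Mathlib

open Set

/-- The IFS 𝒮₁(a) = {x/7, x/7 + a, x/7 + 6/7} on ℝ. -/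
noncomputable def S1 (a : ℝ) : Fin 3 → ℝ → ℝ :=
  ![fun x => x / 7, fun x => x / 7 + a, fun x => x / 7 + 6 / 7]

/-- For a word σ = (s₁,…,s_k), the composition S_σ = S_{s₁} ∘ ⋯ ∘ S_{s_k}. -/
noncomputable def Sw1 (a : ℝ) : List (Fin 3) → ℝ → ℝ
  | [] => id
  | i :: σ => S1 a i ∘ Sw1 a σ

/-- For words σ, τ of the same length k, S_σ⁻¹ ∘ S_τ is the translation by
`amt1 a σ τ = 7 ^ k * (S_τ(0) − S_σ(0))`. -/
noncomputable def amt1 (a : ℝ) (σ τ : List (Fin 3)) : ℝ :=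
  7 ^ σ.length * (Sw1 a τ 0 - Sw1 a σ 0)

/-- The weak separation property for 𝒮₁(a): the nonzero translation amounts
`a_{σ,τ}` over pairs of words of equal length are bounded away from 0. -/
def WSP1 (a : ℝ) : Prop :=
  ∃ ε > 0, ∀ σ τ : List (Fin 3), σ.length = τ.length →
    amt1 a σ τ ≠ 0 → ε ≤ |amt1 a σ τ|

/-- The neighbourhood type of a word σ relative to the open interval (0,1). -/
noncomputable def Ntype1 (a : ℝ) (σ : List (Fin 3)) : Set ℝ :=
  { t | ∃ τ : List (Fin 3), τ.length = σ.length ∧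
      (Sw1 a σ '' Ioo 0 1 ∩ Sw1 a τ '' Ioo 0 1).Nonempty ∧ t = amt1 a σ τ }

/-- The convex finite type condition: only finitely many neighbourhood types
relative to (0,1). -/
def FTCco1 (a : ℝ) : Prop := (Set.range (Ntype1 a)).Finite


/-- digits -/
def chi15 (f : ℕ → Bool) (n : ℕ) : ℝ :=
  if n % 4 = 1 then 1 else if n % 4 = 3 then (cond (f (n / 4)) 1 0) else 0

lemma chi15_cases (f : ℕ → Bool) (n : ℕ) : chi15 f n = 0 ∨ chi15 f n = 1 := by
  unfold chi15
  split_ifs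
  · simp
  · cases f (n / 4) <;> simp
  · simp

/-- tails -/
noncomputable def s15 (f : ℕ → Bool) (m : ℕ) : ℝ := ∑' n, chi15 f (m + n) * (1 / 7 : ℝ) ^ (n + 1)

lemma geo15 : HasSum (fun n : ℕ => (1 / 7 : ℝ) ^ (n + 1)) (1 / 6) := by
  have h := (hasSum_geometric_of_lt_one (r := (1 / 7 : ℝ)) (by norm_num) (by norm_num)).mul_left (1 / 7)
  have e : (fun n : ℕ => (1 / 7 : ℝ) ^ (n + 1)) = fun n : ℕ => 1 / 7 * (1 / 7 : ℝ) ^ n := by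
    ext n; ring
  rw [e, show (1 / 6 : ℝ) = 1 / 7 * (1 - 1 / 7)⁻¹ by norm_num]
  exact h

lemma summ15 (f : ℕ → Bool) (m : ℕ) :
    Summable (fun n => chi15 f (m + n) * (1 / 7 : ℝ) ^ (n + 1)) := by
  refine Summable.of_nonneg_of_le (fun n => ?_) (fun n => ?_) geo15.summable
  · rcases chi15_cases f (m + n) with h | h <;> rw [h] <;> positivity
  · have : (0 : ℝ) ≤ (1 / 7 : ℝ) ^ (n + 1) := by positivity
    rcases chi15_cases f (m + n) with h | h <;> rw [h] <;> linarith

lemma s15_nonneg (f : ℕ → Bool) (m : ℕ) : 0 ≤ s15 f m := by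
  refine tsum_nonneg (fun n => ?_)
  rcases chi15_cases f (m + n) with h | h <;> rw [h] <;> positivity

lemma s15_le (f : ℕ → Bool) (m : ℕ) : s15 f m ≤ 1 / 6 := by
  rw [← geo15.tsum_eq]
  refine Summable.tsum_le_tsum (fun n => ?_) (summ15 f m) geo15.summable
  have : (0 : ℝ) ≤ (1 / 7 : ℝ) ^ (n + 1) := by positivity
  rcases chi15_cases f (m + n) with h | h <;> rw [h] <;> linarith

lemma s15_rec (f : ℕ → Bool) (m : ℕ) : s15 f m = (chi15 f m + s15 f (m + 1)) / 7 := by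
  unfold s15
  rw [(summ15 f m).tsum_eq_zero_add]
  have : ∀ n : ℕ, chi15 f (m + (n + 1)) * (1 / 7 : ℝ) ^ (n + 1 + 1)
      = (1 / 7) * (chi15 f (m + 1 + n) * (1 / 7 : ℝ) ^ (n + 1)) := by
    intro n
    rw [show m + (n + 1) = m + 1 + n by ring]; ring
  simp_rw [this]
  rw [tsum_mul_left]
  simp
  ring

lemma s15_rec4 (f : ℕ → Bool) (k : ℕ) :
    s15 f (4 * k) = 1 / 49 + (cond (f k) 1 0) / 2401 + s15 f (4 * (k + 1)) / 2401 := by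
  have e0 : chi15 f (4 * k) = 0 := by
    simp [chi15]
  have e1 : chi15 f (4 * k + 1) = 1 := by
    have : (4 * k + 1) % 4 = 1 := by omega
    simp [chi15, this]
  have e2 : chi15 f (4 * k + 2) = 0 := by
    have : (4 * k + 2) % 4 = 2 := by omega
    simp [chi15, this]
  have e3 : chi15 f (4 * k + 3) = cond (f k) 1 0 := by
    have : (4 * k + 3) % 4 = 3 := by omega
    have h : (4 * k + 3) / 4 = k := by omega
    simp [chi15, this, h]
  rw [s15_rec f (4 * k), s15_rec f (4 * k + 1), s15_rec f (4 * k + 1 + 1),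
    s15_rec f (4 * k + 1 + 1 + 1), e0, e1]
  simp only [add_assoc]
  norm_num only
  rw [e2, e3]
  rw [show 4 * k + 4 = 4 * (k + 1) by ring]
  ring

lemma s15_inj_aux (f g : ℕ → Bool) (k : ℕ) (h : s15 f (4 * k) = s15 g (4 * k)) :
    f k = g k ∧ s15 f (4 * (k + 1)) = s15 g (4 * (k + 1)) := by
  rw [s15_rec4 f k, s15_rec4 g k] at h
  have h1 := s15_nonneg f (4 * (k + 1))
  have h2 := s15_nonneg g (4 * (k + 1))
  have h3 := s15_le f (4 * (k + 1))
  have h4 := s15_le g (4 * (k + 1))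
  cases hf : f k <;> cases hg : g k <;> simp only [hf, hg, cond_true, cond_false] at h
  · exact ⟨rfl, by linarith⟩
  · exfalso; linarith
  · exfalso; linarith
  · exact ⟨rfl, by linarith⟩

lemma s15_inj : Function.Injective (fun f : ℕ → Bool => s15 f 0) := by
  intro f g h
  have H : ∀ k, s15 f (4 * k) = s15 g (4 * k) := by
    intro k
    induction k with
    | zero => simpa using h
    | succ k ih => exact (s15_inj_aux f g k ih).2
  funext k
  exact (s15_inj_aux f g k (H k)).1

lemma s15_irr : ∃ f, Irrational (s15 f 0) := by
  by_contra! hcon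
  have hsub : range (fun f : ℕ → Bool => s15 f 0) ⊆ range ((↑) : ℚ → ℝ) := by
    rintro x ⟨f, rfl⟩
    have := hcon f
    unfold Irrational at this
    exact not_not.mp this
  have hc : (range (fun f : ℕ → Bool => s15 f 0)).Countable := (countable_range _).mono hsub
  have h2 : (univ : Set (ℕ → Bool)).Countable := by
    rw [← image_univ] at hc
    exact (countable_of_injective_of_countable_image s15_inj.injOn hc)
  have h3 : Countable (ℕ → Bool) := countable_univ_iff.mp h2
  have h4 : Countable (Set ℕ) := by
    classical
    exact Function.Injective.countable (f := fun (s : Set ℕ) (n : ℕ) => decide (n ∈ s)) (by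
      intro s t h
      ext n
      simpa using congrFun h n)
  obtain ⟨g, hg⟩ := exists_surjective_nat (Set ℕ)
  exact Function.cantor_surjective g hg

lemma chi15_consec (f : ℕ → Bool) (n : ℕ) (h : chi15 f n = 1) : chi15 f (n + 1) = 0 := by
  have hn : n % 4 = 1 ∨ n % 4 = 3 := by
    by_contra! hh
    simp [chi15, hh.1, hh.2] at h
  have h1 : (n + 1) % 4 ≠ 1 := by omega
  have h3 : (n + 1) % 4 ≠ 3 := by omega
  simp [chi15, h1, h3]

lemma s15_le2 (f : ℕ → Bool) (m : ℕ) : s15 f m ≤ 43 / 294 := by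
  rcases chi15_cases f m with h | h
  · rw [s15_rec, h]; have := s15_le f (m + 1); linarith
  · rw [s15_rec, s15_rec f (m + 1), h, chi15_consec f m h]
    have := s15_le f (m + 1 + 1); linarith

lemma s15_ge (f : ℕ → Bool) (m : ℕ) : 1 / 2401 ≤ s15 f m := by
  have key : ∀ n, n % 4 = 1 → 1 / 7 ≤ s15 f n := by
    intro n hn
    have : chi15 f n = 1 := by simp [chi15, hn]
    rw [s15_rec, this]
    have := s15_nonneg f (n + 1); linarith
  have step : ∀ n, s15 f (n + 1) / 7 ≤ s15 f n := by
    intro n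
    rw [s15_rec f n]
    rcases chi15_cases f n with h | h <;> rw [h] <;> linarith
  have a1 := step m
  have a2 := step (m + 1)
  have a3 := step (m + 1 + 1)
  have h : m % 4 = 0 ∨ m % 4 = 1 ∨ m % 4 = 2 ∨ m % 4 = 3 := by omega
  rcases h with h | h | h | h
  · have := key (m + 1) (by omega); linarith
  · have := key m (by omega); linarith
  · have := key (m + 1 + 1 + 1) (by omega); linarith
  · have := key (m + 1 + 1) (by omega); linarith

lemma exists_s15 : ∃ s : ℕ → ℝ, s 0 ≤ 1 / 42 ∧ Function.Injective s ∧
    (∀ m, 1 / 2401 ≤ s m ∧ s m ≤ 43 / 294) ∧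
    ∀ m, s (m + 1) = 7 * s m ∨ s (m + 1) = 7 * s m - 1 := by
  obtain ⟨f, hf⟩ := s15_irr
  have hrec : ∀ m, s15 f (m + 1) = 7 * s15 f m ∨ s15 f (m + 1) = 7 * s15 f m - 1 := by
    intro m
    have := s15_rec f m
    rcases chi15_cases f m with h | h <;> rw [h] at this
    · left; linarith
    · right; linarith
  have hN : ∀ m, ∃ N : ℤ, s15 f m = 7 ^ m * s15 f 0 - N := by
    intro m
    induction m with
    | zero => exact ⟨0, by simp⟩
    | succ m ih =>
      obtain ⟨N, hN⟩ := ih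
      rcases hrec m with h | h
      · exact ⟨7 * N, by rw [h, hN]; push_cast; ring⟩
      · exact ⟨7 * N + 1, by rw [h, hN]; push_cast; ring⟩
  refine ⟨s15 f, ?_, ?_, fun m => ⟨s15_ge f m, s15_le2 f m⟩, hrec⟩
  · have : chi15 f 0 = 0 := by simp [chi15]
    rw [s15_rec, this]
    have := s15_le f (0 + 1)
    linarith
  · intro i j hij
    by_contra hne
    obtain ⟨N, hN1⟩ := hN i
    obtain ⟨M, hM1⟩ := hN j
    have hd : (7 : ℝ) ^ i - 7 ^ j ≠ 0 := by
      intro h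
      exact hne (pow_right_injective₀ (by norm_num : (0 : ℝ) < 7) (by norm_num) (sub_eq_zero.mp h))
    apply hf
    refine ⟨((N - M : ℤ) : ℚ) / ((7 : ℚ) ^ i - 7 ^ j), ?_⟩
    push_cast
    rw [div_eq_iff hd]
    rw [hij] at hN1
    linarith

/-- scaled digits -/
noncomputable def D15 (a : ℝ) : Fin 3 → ℝ := ![0, 7 * a, 6]

lemma S1_eq (a : ℝ) (i : Fin 3) (x : ℝ) : S1 a i x = (x + D15 a i) / 7 := by
  fin_cases i <;> simp [S1, D15] <;> ring

lemma Sw1_aff (a : ℝ) (σ : List (Fin 3)) (x : ℝ) :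
    Sw1 a σ x = Sw1 a σ 0 + x * ((7 : ℝ) ^ σ.length)⁻¹ := by
  induction σ generalizing x with
  | nil => simp [Sw1]
  | cons i σ ih =>
    simp only [Sw1, Function.comp_apply, S1_eq, List.length_cons]
    rw [ih, pow_succ]
    field_simp
    ring

lemma Sw1_append (a : ℝ) (σ : List (Fin 3)) (i : Fin 3) (x : ℝ) :
    Sw1 a (σ ++ [i]) x = Sw1 a σ (S1 a i x) := by
  induction σ with
  | nil => simp [Sw1]
  | cons j σ ih => simp [Sw1, ih]

lemma amt1_append (a : ℝ) (σ τ : List (Fin 3)) (h : σ.length = τ.length) (i j : Fin 3) :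
    amt1 a (σ ++ [i]) (τ ++ [j]) = 7 * amt1 a σ τ + (D15 a j - D15 a i) := by
  unfold amt1
  rw [Sw1_append, Sw1_append, Sw1_aff a τ, Sw1_aff a σ (S1 a i 0), S1_eq, S1_eq, ← h]
  simp only [List.length_append, List.length_singleton, pow_succ]
  field_simp
  ring

lemma Sw1_diff (a : ℝ) (σ τ : List (Fin 3)) (h : σ.length = τ.length) (z w : ℝ) :
    Sw1 a σ z - Sw1 a τ w = (z - w - amt1 a σ τ) * ((7 : ℝ) ^ σ.length)⁻¹ := by
  unfold amt1
  rw [Sw1_aff a σ z, Sw1_aff a τ w, ← h]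
  field_simp
  ring

/-- allowed amounts -/
def G15 (t : ℕ → ℝ) (x : ℝ) : Prop :=
  x = 0 ∨ (∃ m, x = t m) ∨ (∃ m, x = - t m) ∨ x = 1 ∨ x = -1 ∨ 1 + 1 / 1000 ≤ x ∨ x ≤ -(1 + 1 / 1000)

lemma G15_big {t : ℕ → ℝ} {x : ℝ} (h : 1 + 1 / 1000 ≤ x) : G15 t x := by
  unfold G15; tauto

lemma G15_small {t : ℕ → ℝ} {x : ℝ} (h : x ≤ -(1 + 1 / 1000)) : G15 t x := by
  unfold G15; tauto

lemma G15_neg {t : ℕ → ℝ} {x : ℝ} (h : G15 t x) : G15 t (-x) := by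
  rcases h with h | ⟨m, h⟩ | ⟨m, h⟩ | h | h | h | h
  · left; linarith
  · right; right; left; exact ⟨m, by linarith⟩
  · right; left; exact ⟨m, by linarith⟩
  · right; right; right; right; left; linarith
  · right; right; right; left; linarith
  · exact G15_small (by linarith)
  · exact G15_big (by linarith)

lemma G15_step_pos {t : ℕ → ℝ} {a : ℝ} (ha : 1 / 8 ≤ a) (ha' : a < 1 / 7) (h0 : t 0 = 7 * a)
    (ht : ∀ m, 1 / 5 ≤ t m ∧ t m ≤ 1 - 1 / 1000)
    (hr : ∀ m, t (m + 1) = 7 * t m - 6 ∨ t (m + 1) = 7 * t m - 7 * a)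
    {x : ℝ} (h : x = 0 ∨ (∃ m, x = t m) ∨ x = 1 ∨ 1 + 1 / 1000 ≤ x) (i j : Fin 3) :
    G15 t (7 * x + (D15 a j - D15 a i)) := by
  rcases h with h | ⟨m, h⟩ | h | h
  · subst h
    fin_cases i <;> fin_cases j <;> simp [D15]
    · left; rfl
    · right; left; exact ⟨0, by linarith⟩
    · exact G15_big (by linarith)
    · right; right; left; exact ⟨0, by linarith⟩
    · left; rfl
    · exact G15_big (by linarith)
    · exact G15_small (by linarith)
    · exact G15_small (by linarith)
    · left; rfl
  · subst h
    have h1 := ht m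
    have h2 := ht (m + 1)
    rcases hr m with hr | hr
    · fin_cases i <;> fin_cases j <;> simp [D15]
      all_goals first
        | exact G15_big (by linarith)
        | exact G15_small (by linarith)
        | (right; left; exact ⟨m + 1, by linarith⟩)
    · fin_cases i <;> fin_cases j <;> simp [D15]
      all_goals first
        | exact G15_big (by linarith)
        | exact G15_small (by linarith)
        | (right; left; exact ⟨m + 1, by linarith⟩)
  · subst h
    fin_cases i <;> fin_cases j <;> simp [D15]
    all_goals first
      | exact G15_big (by linarith)
      | (right; right; right; left; linarith)
  · fin_cases i <;> fin_cases j <;> simp [D15]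
    all_goals exact G15_big (by linarith)

lemma G15_step {t : ℕ → ℝ} {a : ℝ} (ha : 1 / 8 ≤ a) (ha' : a < 1 / 7) (h0 : t 0 = 7 * a)
    (ht : ∀ m, 1 / 5 ≤ t m ∧ t m ≤ 1 - 1 / 1000)
    (hr : ∀ m, t (m + 1) = 7 * t m - 6 ∨ t (m + 1) = 7 * t m - 7 * a)
    {x : ℝ} (h : G15 t x) (i j : Fin 3) :
    G15 t (7 * x + (D15 a j - D15 a i)) := by
  have P := fun (y : ℝ) (hy : y = 0 ∨ (∃ m, y = t m) ∨ y = 1 ∨ 1 + 1 / 1000 ≤ y) (i j : Fin 3) =>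
    G15_step_pos ha ha' h0 ht hr hy i j
  have Q : ∀ y : ℝ, (y = 0 ∨ (∃ m, y = t m) ∨ y = 1 ∨ 1 + 1 / 1000 ≤ y) → x = -y →
      G15 t (7 * x + (D15 a j - D15 a i)) := by
    intro y hy hxy
    have := G15_neg (P y hy j i)
    rw [hxy]
    convert this using 1
    ring
  rcases h with h | ⟨m, h⟩ | ⟨m, h⟩ | h | h | h | h
  · exact P x (Or.inl h) i j
  · exact P x (Or.inr (Or.inl ⟨m, h⟩)) i j
  · exact Q (t m) (Or.inr (Or.inl ⟨m, rfl⟩)) h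
  · exact P x (Or.inr (Or.inr (Or.inl h))) i j
  · exact Q 1 (Or.inr (Or.inr (Or.inl rfl))) h
  · exact P x (Or.inr (Or.inr (Or.inr h))) i j
  · exact Q (-x) (Or.inr (Or.inr (Or.inr (by linarith)))) (by ring)

lemma G15_all {t : ℕ → ℝ} {a : ℝ} (ha : 1 / 8 ≤ a) (ha' : a < 1 / 7) (h0 : t 0 = 7 * a)
    (ht : ∀ m, 1 / 5 ≤ t m ∧ t m ≤ 1 - 1 / 1000)
    (hr : ∀ m, t (m + 1) = 7 * t m - 6 ∨ t (m + 1) = 7 * t m - 7 * a)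
    (n : ℕ) : ∀ (σ τ : List (Fin 3)), σ.length = n → τ.length = n → G15 t (amt1 a σ τ) := by
  induction n with
  | zero =>
    intro σ τ h1 h2
    rw [List.length_eq_zero_iff] at h1 h2
    subst h1 h2
    left; simp [amt1]
  | succ n ih =>
    intro σ τ h1 h2
    rcases List.eq_nil_or_concat σ with h | ⟨σ', i, h⟩
    · simp [h] at h1
    rcases List.eq_nil_or_concat τ with h' | ⟨τ', j, h'⟩
    · simp [h'] at h2
    subst h h'
    simp at h1 h2
    simp only [List.concat_eq_append] 
    rw [amt1_append a σ' τ' (by rw [h1, h2])]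
    exact G15_step ha ha' h0 ht hr (ih σ' τ' h1 h2) i j

lemma words15 {t : ℕ → ℝ} {a : ℝ} (h0 : t 0 = 7 * a)
    (hr : ∀ m, t (m + 1) = 7 * t m - 6 ∨ t (m + 1) = 7 * t m - 7 * a) (m : ℕ) :
    ∃ σ τ : List (Fin 3), σ.length = τ.length ∧ amt1 a σ τ = t m := by
  induction m with
  | zero =>
    refine ⟨[] ++ [0], [] ++ [1], rfl, ?_⟩
    rw [amt1_append a [] [] rfl, h0]
    simp [amt1, D15]
  | succ m ih =>
    obtain ⟨σ, τ, hl, he⟩ := ih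
    rcases hr m with h | h
    · refine ⟨σ ++ [2], τ ++ [0], by simp [hl], ?_⟩
      rw [amt1_append a σ τ hl, h, he]
      simp [D15]; ring
    · refine ⟨σ ++ [1], τ ++ [0], by simp [hl], ?_⟩
      rw [amt1_append a σ τ hl, h, he]
      simp [D15]; ring

lemma attr15 {a : ℝ} (ha0 : 0 < a) (ha : a < 1 / 7) (K : Set ℝ) (hne : K.Nonempty)
    (hc : IsCompact K) (hK : K = ⋃ i, S1 a i '' K) :
    ({0, 1} : Set ℝ) ⊆ K ∧ K ⊆ Icc 0 1 ∧ K ≠ Icc 0 1 := by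
  have hin : ∀ i, ∀ x ∈ K, S1 a i x ∈ K := by
    intro i x hx
    rw [hK]
    exact mem_iUnion.mpr ⟨i, x, hx, rfl⟩
  have hout : ∀ x ∈ K, ∃ y ∈ K, x = y / 7 ∨ x = y / 7 + a ∨ x = y / 7 + 6 / 7 := by
    intro x hx
    rw [hK] at hx
    obtain ⟨i, y, hy, rfl⟩ := mem_iUnion.mp hx
    refine ⟨y, hy, ?_⟩
    fin_cases i <;> simp [S1]
  have hsub : K ⊆ Icc 0 1 := by
    obtain ⟨M, hM, hMax⟩ := hc.exists_isGreatest hne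
    obtain ⟨l, hl, hMin⟩ := hc.exists_isLeast hne
    have h1 : M ≤ 1 := by
      obtain ⟨y, hy, h⟩ := hout M hM
      have := hMax hy
      rcases h with h | h | h <;> linarith
    have h2 : 0 ≤ l := by
      obtain ⟨y, hy, h⟩ := hout l hl
      have := hMin hy
      rcases h with h | h | h <;> linarith
    intro x hx
    exact ⟨h2.trans (hMin hx), (hMax hx).trans h1⟩
  obtain ⟨x, hx⟩ := hne
  have hlim : Filter.Tendsto (fun n : ℕ => (1 / 7 : ℝ) ^ n) Filter.atTop (nhds 0) :=
    tendsto_pow_atTop_nhds_zero_of_lt_one (by norm_num) (by norm_num)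
  refine ⟨?_, hsub, ?_⟩
  · rintro y (rfl | rfl)
    · have hm : ∀ n : ℕ, x * (1 / 7 : ℝ) ^ n ∈ K := by
        intro n
        induction n with
        | zero => simpa using hx
        | succ n ih =>
          have := hin 0 _ ih
          simp only [S1, Matrix.cons_val_zero] at this
          convert this using 1
          ring
      refine hc.isClosed.mem_of_tendsto (b := Filter.atTop) (f := fun n : ℕ => x * (1 / 7 : ℝ) ^ n) ?_
        (Filter.Eventually.of_forall hm)
      simpa using hlim.const_mul x
    · have hm : ∀ n : ℕ, 1 + (x - 1) * (1 / 7 : ℝ) ^ n ∈ K := by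
        intro n
        induction n with
        | zero => simpa using hx
        | succ n ih =>
          have := hin 2 _ ih
          simp only [S1, Matrix.cons_val] at this
          convert this using 1
          ring
      refine hc.isClosed.mem_of_tendsto (b := Filter.atTop)
        (f := fun n : ℕ => 1 + (x - 1) * (1 / 7 : ℝ) ^ n) ?_
        (Filter.Eventually.of_forall hm)
      simpa using (hlim.const_mul (x - 1)).const_add 1
  · intro h
    have hh : (1 / 2 : ℝ) ∈ K := by rw [h]; constructor <;> norm_num
    obtain ⟨y, hy, h'⟩ := hout _ hh
    have := hsub hy
    rcases h' with h' | h' | h' <;> linarith [this.1, this.2]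

theorem stmt15 : ∃ a ∈ Ioo (0 : ℝ) (1 / 7),
    WSP1 a ∧
    (∃ c > 0, ∀ σ τ : List (Fin 3), σ.length = τ.length →
      ∀ z ∈ ({0, 1} : Set ℝ), ∀ w ∈ ({0, 1} : Set ℝ),
        Sw1 a σ z = Sw1 a τ w ∨
          c * ((7 : ℝ) ^ σ.length)⁻¹ < |Sw1 a σ z - Sw1 a τ w|) ∧
    ¬ FTCco1 a ∧
    ∀ K : Set ℝ, K.Nonempty → IsCompact K → K = ⋃ i, S1 a i '' K →
      ({0, 1} : Set ℝ) ⊆ K ∧ K ⊆ Icc 0 1 ∧ K ≠ Icc 0 1 := by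
  obtain ⟨s, hs0, hinj, hb, hrec⟩ := exists_s15
  have hs0' := (hb 0).1
  obtain ⟨b, hbdef⟩ : ∃ b : ℝ, b = (1 - 6 * s 0) / (1 - s 0) := ⟨_, rfl⟩
  have hpos : 0 < 1 - s 0 := by linarith
  have hbe : b * (1 - s 0) = 1 - 6 * s 0 := by
    rw [hbdef]; field_simp
  have hb1 : b < 1 := by
    rw [hbdef, div_lt_one hpos]; linarith
  have hb2 : 7 / 8 ≤ b := by
    rw [hbdef, le_div_iff₀ hpos]; linarith
  obtain ⟨a, hadef⟩ : ∃ a : ℝ, a = b / 7 := ⟨_, rfl⟩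
  have ha : 1 / 8 ≤ a := by linarith
  have ha' : a < 1 / 7 := by linarith
  obtain ⟨t, htdef⟩ : ∃ t : ℕ → ℝ, ∀ m, t m = 1 - (6 - b) * s m := ⟨_, fun _ => rfl⟩
  have h0 : t 0 = 7 * a := by rw [htdef, hadef]; linarith
  have ht : ∀ m, 1 / 5 ≤ t m ∧ t m ≤ 1 - 1 / 1000 := by
    intro m
    rw [htdef]
    obtain ⟨h1, h2⟩ := hb m
    constructor <;> nlinarith
  have hr : ∀ m, t (m + 1) = 7 * t m - 6 ∨ t (m + 1) = 7 * t m - 7 * a := by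
    intro m
    rw [htdef, htdef, hadef]
    rcases hrec m with h | h
    · left; rw [h]; ring
    · right; rw [h]; ring
  have htinj : Function.Injective t := by
    intro i j hij
    rw [htdef, htdef] at hij
    apply hinj
    have : (6 - b) ≠ 0 := by linarith
    exact mul_left_cancel₀ this (by linarith)
  have hG : ∀ σ τ : List (Fin 3), σ.length = τ.length → G15 t (amt1 a σ τ) :=
    fun σ τ h => G15_all ha ha' h0 ht hr _ σ τ rfl h.symm
  refine ⟨a, ⟨by linarith, ha'⟩, ⟨1 / 5, by norm_num, ?_⟩, ⟨1 / 2000, by norm_num, ?_⟩, ?_, ?_⟩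
  · intro σ τ hl hn
    rw [le_abs]
    rcases hG σ τ hl with h | ⟨m, h⟩ | ⟨m, h⟩ | h | h | h | h
    · exact absurd h hn
    · left; rw [h]; exact (ht m).1
    · right; rw [h]; linarith [(ht m).1]
    · left; linarith
    · right; linarith
    · left; linarith
    · right; linarith
  · intro σ τ hl z hz w hw
    have hd := Sw1_diff a σ τ hl z w
    have hp : (0 : ℝ) < ((7 : ℝ) ^ σ.length)⁻¹ := by positivity
    have key : z - w - amt1 a σ τ = 0 ∨ 1 / 2000 < |z - w - amt1 a σ τ| := by
      rw [lt_abs]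
      rcases hz with rfl | rfl <;> rcases hw with rfl | rfl <;>
      rcases hG σ τ hl with h | ⟨m, h⟩ | ⟨m, h⟩ | h | h | h | h
      all_goals first
        | (left; linarith)
        | (right; left; linarith)
        | (right; right; linarith)
        | (right; left; linarith [(ht m).1, (ht m).2])
        | (right; right; linarith [(ht m).1, (ht m).2])
    rcases key with h | h
    · left
      rw [h, zero_mul] at hd
      linarith
    · right
      rw [hd, abs_mul, abs_of_pos hp]
      exact mul_lt_mul_of_pos_right h hp
  · intro hF
    have hfin : (⋃₀ range (Ntype1 a)).Finite := by
      refine Set.Finite.sUnion hF ?_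
      rintro _ ⟨σ, rfl⟩
      refine ((List.finite_length_eq (Fin 3) σ.length).image (amt1 a σ)).subset ?_
      rintro x ⟨τ, h1, -, rfl⟩
      exact ⟨τ, h1, rfl⟩
    refine (infinite_range_of_injective htinj) (hfin.subset ?_)
    rintro _ ⟨m, rfl⟩
    obtain ⟨σ, τ, hl, he⟩ := words15 h0 hr m
    obtain ⟨h1, h2⟩ := ht m
    refine ⟨Ntype1 a σ, ⟨σ, rfl⟩, τ, hl.symm, ?_, he.symm⟩
    refine ⟨Sw1 a σ ((1 + t m) / 2), ⟨_, ⟨by linarith, by linarith⟩, rfl⟩,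
      ⟨(1 - t m) / 2, ⟨by linarith, by linarith⟩, ?_⟩⟩
    have hd := Sw1_diff a σ τ hl ((1 + t m) / 2) ((1 - t m) / 2)
    rw [he] at hd
    have : (1 + t m) / 2 - (1 - t m) / 2 - t m = 0 := by ring
    rw [this, zero_mul] at hd
    linarith
  · intro K hne hc hK
    exact attr15 (by linarith) ha' K hne hc hK
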